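/- Let p ≥ 7 be an odd integer and let u : [0,1] → ℝ be continuously differentiable on [0,1), twice differentiable on (0,1), satisfy the self-similar profile equation (1−ρ²)u''(ρ) + (2/ρ − (2+2α)ρ)u'(ρ) − α(α+1)u(ρ) + u(ρ)^p = 0 for all ρ ∈ (0,1), and suppose u(0) > 0. Then u(ρ) > 0 for every ρ ∈ (0,1). -/

import Mathlib

open Set Real Filter

/-- The exponent `α = 2/(p-1)`. -/
noncomputable def alphaP (p : ℕ) : ℝ := 2 / ((p : ℝ) - 1)

/-- `b₀ = (2(p+1)/(p-1)²)^(1/(p-1))`, the constant solution. -/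
noncomputable def bZero (p : ℕ) : ℝ :=
  (2 * ((p : ℝ) + 1) / ((p : ℝ) - 1) ^ 2) ^ ((1 : ℝ) / ((p : ℝ) - 1))

/-- `b∞ = (2(p-3)/(p-1)²)^(1/(p-1))`. -/
noncomputable def bInfty (p : ℕ) : ℝ :=
  (2 * ((p : ℝ) - 3) / ((p : ℝ) - 1) ^ 2) ^ ((1 : ℝ) / ((p : ℝ) - 1))

/-- The singular static solution `u∞(ρ) = b∞ ρ^(-α)`. -/
noncomputable def uInfty (p : ℕ) (ρ : ℝ) : ℝ := bInfty p * ρ ^ (-(alphaP p))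

/-- The self-similar profile equation
`(1-ρ²)u'' + (2/ρ - (2+2α)ρ)u' - α(α+1)u + u^p = 0` at the point `ρ`. -/
def ProfileEq (p : ℕ) (u : ℝ → ℝ) (ρ : ℝ) : Prop :=
  (1 - ρ ^ 2) * deriv (deriv u) ρ + (2 / ρ - (2 + 2 * alphaP p) * ρ) * deriv u ρ
    - alphaP p * (alphaP p + 1) * u ρ + u ρ ^ p = 0

/-- A solution that is `C¹` on `[0,1)`, twice differentiable on
`(0,1)`, satisfies the profile equation on `(0,1)` and has `u(0) > 0` is positive
on `(0,1)`. -/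
theorem solution_positive (p : ℕ) (hp_odd : Odd p) (hp : 7 ≤ p) (u : ℝ → ℝ)
    (hC1 : ContDiffOn ℝ 1 u (Ico 0 1))
    (hdiff : ∀ ρ ∈ Ioo (0 : ℝ) 1, DifferentiableAt ℝ u ρ)
    (hdiff2 : ∀ ρ ∈ Ioo (0 : ℝ) 1, DifferentiableAt ℝ (deriv u) ρ)
    (heq : ∀ ρ ∈ Ioo (0 : ℝ) 1, ProfileEq p u ρ)
    (h0 : 0 < u 0) :
    ∀ ρ ∈ Ioo (0 : ℝ) 1, 0 < u ρ := by
  intro r hr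
  by_contra hneg
  push Not at hneg
  have hcu : ContinuousOn u (Ico 0 1) := hC1.continuousOn
  have hcv : ContinuousOn (derivWithin u (Ico 0 1)) (Ico 0 1) :=
    hC1.continuousOn_derivWithin (uniqueDiffOn_Ico 0 1) le_rfl
  have hsub : Icc 0 r ⊆ Ico (0 : ℝ) 1 := fun x hx => ⟨hx.1, hx.2.trans_lt hr.2⟩
  -- least zero
  obtain ⟨z, hz, hz0⟩ : (0 : ℝ) ∈ u '' Icc 0 r :=
    intermediate_value_Icc' hr.1.le (hcu.mono hsub) ⟨hneg, h0.le⟩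
  have hclosed : IsClosed (Icc 0 r ∩ u ⁻¹' {0}) :=
    (hcu.mono hsub).preimage_isClosed_of_isClosed isClosed_Icc isClosed_singleton
  have hcomp : IsCompact (Icc 0 r ∩ u ⁻¹' {0}) :=
    isCompact_Icc.of_isClosed_subset hclosed inter_subset_left
  obtain ⟨s, ⟨hs, hs0⟩, hleast⟩ := hcomp.exists_isLeast ⟨z, hz, hz0⟩
  have hs0 : u s = 0 := hs0
  have hspos : 0 < s := by
    rcases hs.1.eq_or_lt with h | h
    · rw [← h] at hs0; linarith
    · exact h
  have hs1 : s < 1 := (hsub hs).2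
  have hne : ∀ x ∈ Ioo 0 s, u x ≠ 0 := by
    intro x hx h
    exact absurd (hleast ⟨⟨hx.1.le, hx.2.le.trans hs.2⟩, h⟩) (not_le.2 hx.2)
  have hp' : (7 : ℝ) ≤ p := by exact_mod_cast hp
  have hsub' : Icc 0 s ⊆ Ico (0 : ℝ) 1 := fun x hx => ⟨hx.1, hx.2.trans_lt hs1⟩
  have ha : alphaP p ≤ 1 / 3 := by
    unfold alphaP
    rw [div_le_div_iff₀ (by linarith) (by norm_num)]; linarith
  have ha0 : 0 ≤ alphaP p := by
    unfold alphaP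
    exact div_nonneg (by norm_num) (by linarith)
  obtain ⟨a, haeq⟩ : ∃ a, alphaP p = a := ⟨_, rfl⟩
  unfold ProfileEq at heq
  simp only [haeq] at heq ha ha0
  set c : ℝ := 3 * (2 * a - 1) / 4 - a ^ 2 / 2 with hc
  set v := derivWithin u (Ico 0 1) with hv
  set Q : ℝ → ℝ := fun x => 1 / 2 * ((1 - x ^ 2) * x ^ 3) * v x ^ 2
    + 1 / 2 * (x ^ 2 * (1 - x ^ 2)) * (u x * v x) + c * (x ^ 3 * u x ^ 2)
    + x ^ 3 * u x ^ (p + 1) / (p + 1) with hQ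
  have hcu' := hcu.mono hsub'
  have hcv' := hcv.mono hsub'
  have hQc : ContinuousOn Q (Icc 0 s) := by
    rw [hQ]; fun_prop
  have hanti : StrictAntiOn Q (Icc 0 s) := by
    refine strictAntiOn_of_deriv_neg (convex_Icc _ _) hQc ?_
    intro x hx
    rw [interior_Icc] at hx
    have hx1 : x ∈ Ioo (0 : ℝ) 1 := ⟨hx.1, hx.2.trans hs1⟩
    have hvev : v =ᶠ[nhds x] deriv u := by
      filter_upwards [isOpen_Ioo.mem_nhds hx1] with y hy
      exact derivWithin_of_mem_nhds (Ico_mem_nhds hy.1 hy.2)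
    have hvx : v x = deriv u x := hvev.eq_of_nhds
    have hu' : HasDerivAt u (v x) x := hvx ▸ (hdiff x hx1).hasDerivAt
    have hv' : HasDerivAt v (deriv (deriv u) x) x :=
      (hdiff2 x hx1).hasDerivAt.congr_of_eventuallyEq hvev
    have e := heq x hx1
    rw [← hvx] at e
    have hi := hasDerivAt_id' x
    have hQ' := (((((((hi.pow 2).const_sub 1).mul (hi.pow 3)).const_mul (1/2)).mul (hv'.pow 2)).add
      ((((hi.pow 2).mul ((hi.pow 2).const_sub 1)).const_mul (1/2)).mul (hu'.mul hv'))).add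
      (((hi.pow 3).mul (hu'.pow 2)).const_mul c)).add
      (((hi.pow 3).mul (hu'.pow (p+1))).div_const ((p : ℝ) + 1))
    have hQ2 : HasDerivAt Q _ x := hQ'
    rw [hQ2.deriv]
    have hxp := hx.1
    have hw : 0 ≤ u x ^ (p + 1) := (hp_odd.add_one).pow_nonneg _
    have hu0 := hne x hx
    have hpp : u x ^ (p + 1) = u x ^ p * u x := pow_succ _ _
    simp only [Pi.pow_apply, Pi.mul_apply]
    generalize deriv (deriv u) x = w at *
    generalize v x = d at *
    have e2 : (1 - x ^ 2) * w = -(2 / x - (2 + 2 * a) * x) * d + a * (a + 1) * u x - u x ^ p := by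
      linarith
    have key : -(1 - 2 * a) * x ^ 2 * (x ^ 2 * d ^ 2 + 5 / 2 * (x * d * u x)
        + 1 / 2 * (9 / 2 - a) * u x ^ 2) - x ^ 2 * u x ^ (p + 1) * (1 / 2 - 3 / (p + 1)) < 0 := by
      have h1 : 0 ≤ x ^ 2 * u x ^ (p + 1) * (1 / 2 - 3 / ((p : ℝ) + 1)) := by
        refine mul_nonneg (by positivity) ?_
        rw [sub_nonneg, div_le_div_iff₀ (by linarith) (by norm_num)]; linarith
      have hu2 : 0 < u x ^ 2 := by positivity
      have h2 : 0 < x ^ 2 * d ^ 2 + 5 / 2 * (x * d * u x) + 1 / 2 * (9 / 2 - a) * u x ^ 2 := by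
        nlinarith [sq_nonneg (x * d + 5 / 4 * u x)]
      have h3 : 0 < (1 - 2 * a) * x ^ 2 := mul_pos (by linarith) (by positivity)
      nlinarith [mul_pos h3 h2]
    refine lt_of_eq_of_lt ?_ key
    have e3 : x * ((1 - x ^ 2) * w) = -(2 - (2 + 2 * a) * x ^ 2) * d
        + x * (a * (a + 1) * u x - u x ^ p) := by
      rw [e2]; field_simp; ring
    have hp1 : (p : ℝ) + 1 ≠ 0 := by linarith
    simp only [Nat.add_sub_cancel, hpp, hc]
    push_cast
    have ht : ((p : ℝ) + 1) * ((p : ℝ) + 1)⁻¹ = 1 := mul_inv_cancel₀ hp1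
    simp only [div_eq_mul_inv _ ((p : ℝ) + 1)]
    generalize ((p : ℝ) + 1)⁻¹ = t at *
    linear_combination (x ^ 2 * d + x * u x / 2) * e3 + x ^ 3 * u x ^ p * d * ht
  have hlt := hanti (left_mem_Icc.2 hspos.le) (right_mem_Icc.2 hspos.le) hspos
  have hQ0 : Q 0 = 0 := by simp [hQ]
  have hQs : 0 ≤ Q s := by
    have : Q s = 1 / 2 * ((1 - s ^ 2) * s ^ 3) * v s ^ 2 := by simp [hQ, hs0]
    rw [this]
    have : 0 ≤ 1 - s ^ 2 := by nlinarith
    positivity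
  linarith
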